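/- arXiv:2601.11091 — 5 statements merged into one kernel-verified Lean document; each statement's English description precedes it below -/
import Mathlib

section
/- Let T, k, r, m, p be positive integers, let F_t ∈ ℝ^{k×r} and E_t ∈ ℝ^{p×m} for t = 1, …, T, let C ∈ ℝ^{m×r}, and let α̃ ∈ ℝ with α = α̃² + 2α̃. Writing F̄ = (1/T) ∑_t F_t and Ē = (1/T) ∑_t E_t, one has ‖∑_{t=1}^T (F_t + α̃ F̄) Cᵀ (E_t + α̃ Ē)ᵀ‖_F² = ∑_{j=1}^p ‖∑_{t=1}^T (F_t + α F̄) Cᵀ (E_tʲ)ᵀ‖₂², where E_tʲ ∈ ℝ^{1×m} denotes the j-th row of E_t and ‖·‖₂ is the Euclidean norm of the resulting vector in ℝ^k. -/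
/-!
Since `∑ t, F t = T • Fbar` and `∑ t, E t = T • Ebar`, both cross terms of
`∑ t, (F t + αt • Fbar) * Cᵀ * (E t + αt • Ebar)ᵀ` equal `αt * T` times `Fbar * Cᵀ * Ebarᵀ`, and the
last term is `αt ^ 2 * T` times it. Their total is `α * T` times it, which is what the one-sided
shift by `α • Fbar` contributes (`sum_shift_mul_shift`). The squared Frobenius norm is then the sum
of the squared norms of the columns, and column `j` of `A * (E t)ᵀ` is `A` applied to row `j` of
`E t`.
-/

open Matrix

/-- The Frobenius norm of a real matrix: `√(∑ i j, (M i j)²)`. -/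
noncomputable def frobNorm {m n : Type*} [Fintype m] [Fintype n] (M : Matrix m n ℝ) : ℝ :=
  Real.sqrt (∑ i, ∑ j, (M i j) ^ 2)

/-- The Euclidean norm of a vector in `ℝ^k`. -/
noncomputable def vecNorm {k : ℕ} (v : Fin k → ℝ) : ℝ :=
  Real.sqrt (∑ l, v l ^ 2)

/-- Shifting both factors by `αt` times their means equals, after summation, shifting only the
first factor by `αt ^ 2 + 2 * αt` times its mean. -/
theorem sum_shift_mul_shift {T k r m p : ℕ} (hT : 0 < T)
    (F : Fin T → Matrix (Fin k) (Fin r) ℝ) (E : Fin T → Matrix (Fin p) (Fin m) ℝ)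
    (C : Matrix (Fin m) (Fin r) ℝ) (αt : ℝ)
    (Fbar : Matrix (Fin k) (Fin r) ℝ) (hFbar : Fbar = ((1 : ℝ) / T) • ∑ t, F t)
    (Ebar : Matrix (Fin p) (Fin m) ℝ) (hEbar : Ebar = ((1 : ℝ) / T) • ∑ t, E t) :
    ∑ t, (F t + αt • Fbar) * Cᵀ * (E t + αt • Ebar)ᵀ
      = ∑ t, (F t + (αt ^ 2 + 2 * αt) • Fbar) * Cᵀ * (E t)ᵀ := by
  have hT0 : (T : ℝ) ≠ 0 := by positivity
  have hF : ∑ t, F t = (T : ℝ) • Fbar := by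
    rw [hFbar, smul_smul, mul_one_div_cancel hT0, one_smul]
  have hE : ∑ t, E t = (T : ℝ) • Ebar := by
    rw [hEbar, smul_smul, mul_one_div_cancel hT0, one_smul]
  have hFC : ∑ t, F t * Cᵀ * Ebarᵀ = (T : ℝ) • (Fbar * Cᵀ * Ebarᵀ) := by
    rw [← Matrix.sum_mul, ← Matrix.sum_mul, hF, Matrix.smul_mul, Matrix.smul_mul]
  have hEC : ∑ t, Fbar * Cᵀ * (E t)ᵀ = (T : ℝ) • (Fbar * Cᵀ * Ebarᵀ) := by
    rw [← Matrix.mul_sum, ← Matrix.transpose_sum, hE, Matrix.transpose_smul, Matrix.mul_smul]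
  simp only [Matrix.add_mul, Matrix.mul_add, Matrix.transpose_add, Matrix.transpose_smul,
    Matrix.smul_mul, Matrix.mul_smul, Finset.sum_add_distrib, ← Finset.smul_sum, hFC, hEC,
    Finset.sum_const, Finset.card_univ, Fintype.card_fin, ← Nat.cast_smul_eq_nsmul ℝ]
  module

theorem statement5 (T k r m p : ℕ) (hT : 0 < T) (hk : 0 < k) (hr : 0 < r)
    (hm : 0 < m) (hp : 0 < p)
    (F : Fin T → Matrix (Fin k) (Fin r) ℝ) (E : Fin T → Matrix (Fin p) (Fin m) ℝ)
    (C : Matrix (Fin m) (Fin r) ℝ) (αt α : ℝ) (hα : α = αt ^ 2 + 2 * αt)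
    (Fbar : Matrix (Fin k) (Fin r) ℝ) (hFbar : Fbar = ((1 : ℝ) / T) • ∑ t, F t)
    (Ebar : Matrix (Fin p) (Fin m) ℝ) (hEbar : Ebar = ((1 : ℝ) / T) • ∑ t, E t) :
    frobNorm (∑ t, (F t + αt • Fbar) * Cᵀ * (E t + αt • Ebar)ᵀ) ^ 2
      = ∑ j : Fin p, vecNorm (∑ t, ((F t + α • Fbar) * Cᵀ).mulVec (E t j)) ^ 2 := by
  subst hα
  rw [sum_shift_mul_shift hT F E C αt Fbar hFbar Ebar hEbar]
  unfold frobNorm vecNorm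
  rw [Real.sq_sqrt (by positivity), Finset.sum_comm]
  refine Finset.sum_congr rfl fun j _ => ?_
  rw [Real.sq_sqrt (by positivity)]
  refine Finset.sum_congr rfl fun i _ => ?_
  rw [Matrix.sum_apply, Finset.sum_apply]
  -- Both summands are `∑ l, A i l * E t j l` by definition.
  rfl
end

section
/- Let p, k, s be positive integers, let R̂₁, …, R̂_s ∈ ℝ^{p×k}, R ∈ ℝ^{p×k}, H₁, …, H_s ∈ ℝ^{k×k}, R̂ ∈ ℝ^{p×k}, and let V̂ ∈ ℝ^{k×k} be invertible and satisfy ( (1/(ps)) ∑_{i=1}^s R̂_i R̂_iᵀ ) R̂ = R̂ V̂. Define H = (1/(ps)) ∑_{i=1}^s H_i H_iᵀ Rᵀ R̂ V̂⁻¹. Then R̂ − R H = (1/(ps)) ∑_{i=1}^s [ (R̂_i − R H_i)(R̂_i − R H_i)ᵀ + R H_i (R̂_i − R H_i)ᵀ + (R̂_i − R H_i) H_iᵀ Rᵀ ] R̂ V̂⁻¹. -/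
/-!
Multiplying the eigenvector equation on the right by `V⁻¹` writes `Rg` as the scaled sum of
`Rhat i * (Rhat i)ᵀ`, applied to `Rg * V⁻¹`, while `R * H` is the scaled sum of
`(R * Hm i) * (R * Hm i)ᵀ`, applied to the same matrix. The claim then follows summand by summand
from `A Aᵀ - B Bᵀ = (A - B) (A - B)ᵀ + B (A - B)ᵀ + (A - B) Bᵀ`.
-/

open Matrix

theorem statement6 (p k s : ℕ) (hp : 0 < p) (hk : 0 < k) (hs : 0 < s)
    (Rhat : Fin s → Matrix (Fin p) (Fin k) ℝ)
    (R : Matrix (Fin p) (Fin k) ℝ)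
    (Hm : Fin s → Matrix (Fin k) (Fin k) ℝ)
    (Rg : Matrix (Fin p) (Fin k) ℝ)
    (V : Matrix (Fin k) (Fin k) ℝ) [Invertible V]
    (heig : (((1 : ℝ) / (p * s)) • ∑ i, Rhat i * (Rhat i)ᵀ) * Rg = Rg * V)
    (H : Matrix (Fin k) (Fin k) ℝ)
    (hH : H = ((1 : ℝ) / (p * s)) • ((∑ i, Hm i * (Hm i)ᵀ) * Rᵀ * Rg * ⅟V)) :
    Rg - R * H
      = ((1 : ℝ) / (p * s)) •
          ((∑ i, ((Rhat i - R * Hm i) * (Rhat i - R * Hm i)ᵀ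
              + R * Hm i * (Rhat i - R * Hm i)ᵀ
              + (Rhat i - R * Hm i) * (Hm i)ᵀ * Rᵀ)) * Rg * ⅟V) := by
  -- With `A = Rhat i` and `B = R * Hm i`, each summand telescopes to `A * Aᵀ - B * Bᵀ`.
  have hterm : ∀ i, (Rhat i - R * Hm i) * (Rhat i - R * Hm i)ᵀ
      + R * Hm i * (Rhat i - R * Hm i)ᵀ
      + (Rhat i - R * Hm i) * (Hm i)ᵀ * Rᵀ
      = Rhat i * (Rhat i)ᵀ - R * (Hm i * (Hm i)ᵀ) * Rᵀ := by
    intro i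
    simp only [transpose_sub, transpose_mul, Matrix.sub_mul, Matrix.mul_sub, Matrix.mul_assoc]
    abel
  -- The eigenvector equation, multiplied on the right by the inverse of `V`.
  have hRg : Rg = ((1 : ℝ) / (p * s)) • ((∑ i, Rhat i * (Rhat i)ᵀ) * Rg * ⅟V) := by
    rw [← Matrix.smul_mul, ← Matrix.smul_mul, heig, Matrix.mul_assoc, mul_invOf_self,
      Matrix.mul_one]
  rw [Finset.sum_congr rfl fun i _ => hterm i, Finset.sum_sub_distrib, ← Matrix.sum_mul,
    ← Matrix.mul_sum, Matrix.sub_mul, Matrix.sub_mul, smul_sub, ← hRg, hH, Matrix.mul_smul]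
  simp only [Matrix.mul_assoc]
end

section
/- Let p, k, s be positive integers, let R̂₁, …, R̂_s ∈ ℝ^{p×k}, R ∈ ℝ^{p×k}, H₁, …, H_s ∈ ℝ^{k×k}, R̂ ∈ ℝ^{p×k}, and let V̂ ∈ ℝ^{k×k} be invertible and satisfy ( (1/(ps)) ∑_{i=1}^s R̂_i R̂_iᵀ ) R̂ = R̂ V̂. Define H = (1/(ps)) ∑_{i=1}^s H_i H_iᵀ Rᵀ R̂ V̂⁻¹. Then (1/√p) ‖R̂ − R H‖_F ≤ (‖R̂‖_F/√p) · ‖V̂⁻¹‖_F · (1/s) ∑_{i=1}^s (‖R̂_i − R H_i‖_F/√p) · [ (‖R̂_i − R H_i‖_F/√p) + 2 (‖R‖_F/√p) ‖H_i‖_F ]. -/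
/-!
Write `E i = Rhat i - R * Hm i`. Multiplying the eigen-equation on the right by `V⁻¹` gives
`Rg = (ps)⁻¹ (∑ Rhat i (Rhat i)ᵀ) Rg V⁻¹`, while `R H = (ps)⁻¹ (∑ (R Hm i)(R Hm i)ᵀ) Rg V⁻¹`. Hence
`Rg - R H = (ps)⁻¹ (∑ (Rhat i (Rhat i)ᵀ - (R Hm i)(R Hm i)ᵀ)) Rg V⁻¹`, and each summand equals
`E i (E i)ᵀ + E i (R Hm i)ᵀ + R Hm i (E i)ᵀ`, of Frobenius norm at most
`‖E i‖ (‖E i‖ + 2 ‖R‖ ‖Hm i‖)`. The triangle inequality and submultiplicativity conclude.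
-/

open Matrix

section Frobenius

open scoped Matrix.Norms.Frobenius

/-- Identifies `frobNorm` with Mathlib's Frobenius norm, whose normed-space lemmas then apply. -/
lemma frobNorm_eq_norm {m n : Type*} [Fintype m] [Fintype n] (M : Matrix m n ℝ) :
    frobNorm M = ‖M‖ := by
  rw [Matrix.frobenius_norm_def, frobNorm, Real.sqrt_eq_rpow]
  simp

lemma norm_mul_transpose_sub_le {m n : Type*} [Fintype m] [Fintype n] (A R : Matrix m n ℝ)
    (H : Matrix n n ℝ) :
    ‖A * Aᵀ - R * (H * Hᵀ) * Rᵀ‖ ≤ ‖A - R * H‖ * (‖A - R * H‖ + 2 * ‖R‖ * ‖H‖) := by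
  have hid : A * Aᵀ - R * (H * Hᵀ) * Rᵀ
      = (A - R * H) * (A - R * H)ᵀ + (A - R * H) * (R * H)ᵀ + (R * H) * (A - R * H)ᵀ := by
    simp only [Matrix.transpose_sub, Matrix.transpose_mul, Matrix.sub_mul, Matrix.mul_sub,
      Matrix.mul_assoc]
    abel
  rw [hid]
  set E := A - R * H
  have h1 := Matrix.frobenius_norm_mul E Eᵀ
  have h2 := Matrix.frobenius_norm_mul E (R * H)ᵀ
  have h3 := Matrix.frobenius_norm_mul (R * H) Eᵀ
  rw [Matrix.frobenius_norm_transpose] at h1 h2 h3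
  have h4 := mul_le_mul_of_nonneg_left (Matrix.frobenius_norm_mul R H) (norm_nonneg E)
  have h5 := norm_add₃_le (a := E * Eᵀ) (b := E * (R * H)ᵀ) (c := R * H * Eᵀ)
  linarith

theorem statement7 (p k s : ℕ) (hp : 0 < p) (hk : 0 < k) (hs : 0 < s)
    (Rhat : Fin s → Matrix (Fin p) (Fin k) ℝ)
    (R : Matrix (Fin p) (Fin k) ℝ)
    (Hm : Fin s → Matrix (Fin k) (Fin k) ℝ)
    (Rg : Matrix (Fin p) (Fin k) ℝ)
    (V : Matrix (Fin k) (Fin k) ℝ) [Invertible V]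
    (heig : (((1 : ℝ) / (p * s)) • ∑ i, Rhat i * (Rhat i)ᵀ) * Rg = Rg * V)
    (H : Matrix (Fin k) (Fin k) ℝ)
    (hH : H = ((1 : ℝ) / (p * s)) • ((∑ i, Hm i * (Hm i)ᵀ) * Rᵀ * Rg * ⅟V)) :
    (1 / Real.sqrt p) * frobNorm (Rg - R * H)
      ≤ (frobNorm Rg / Real.sqrt p) * frobNorm (⅟V) *
          (((1 : ℝ) / s) * ∑ i,
            (frobNorm (Rhat i - R * Hm i) / Real.sqrt p) *
              ((frobNorm (Rhat i - R * Hm i) / Real.sqrt p)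
                + 2 * (frobNorm R / Real.sqrt p) * frobNorm (Hm i))) := by
  set c : ℝ := (1 : ℝ) / (p * s) with hc
  have hc0 : 0 ≤ c := by positivity
  have hid : Rg - R * H
      = c • ((∑ i, (Rhat i * (Rhat i)ᵀ - R * (Hm i * (Hm i)ᵀ) * Rᵀ)) * Rg * ⅟V) := by
    have h1 : Rg = c • ((∑ i, Rhat i * (Rhat i)ᵀ) * Rg * ⅟V) := by
      rw [← Matrix.smul_mul, ← Matrix.smul_mul, heig, Matrix.mul_assoc, mul_invOf_self,
        Matrix.mul_one]
    have h2 : R * H = c • ((∑ i, R * (Hm i * (Hm i)ᵀ) * Rᵀ) * Rg * ⅟V) := by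
      rw [hH, Matrix.mul_smul, ← Matrix.sum_mul, ← Matrix.mul_sum]
      simp only [Matrix.mul_assoc]
    rw [Finset.sum_sub_distrib, Matrix.sub_mul, Matrix.sub_mul, smul_sub, ← h1, ← h2]
  simp only [frobNorm_eq_norm]
  have hsum : ‖∑ i, (Rhat i * (Rhat i)ᵀ - R * (Hm i * (Hm i)ᵀ) * Rᵀ)‖
      ≤ ∑ i, ‖Rhat i - R * Hm i‖ * (‖Rhat i - R * Hm i‖ + 2 * ‖R‖ * ‖Hm i‖) :=
    norm_sum_le_of_le _ fun i _ => norm_mul_transpose_sub_le (Rhat i) R (Hm i)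
  have hmain : ‖Rg - R * H‖ ≤ c * ((∑ i, ‖Rhat i - R * Hm i‖ *
      (‖Rhat i - R * Hm i‖ + 2 * ‖R‖ * ‖Hm i‖)) * ‖Rg‖ * ‖⅟V‖) := by
    rw [hid, norm_smul, Real.norm_of_nonneg hc0]
    refine mul_le_mul_of_nonneg_left ?_ hc0
    refine (Matrix.frobenius_norm_mul _ _).trans ?_
    refine mul_le_mul_of_nonneg_right ?_ (norm_nonneg _)
    refine (Matrix.frobenius_norm_mul _ _).trans ?_
    exact mul_le_mul_of_nonneg_right hsum (norm_nonneg _)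
  have hp' : (0 : ℝ) < p := by exact_mod_cast hp
  have hsq : (1 : ℝ) / p = (Real.sqrt p)⁻¹ * (Real.sqrt p)⁻¹ := by
    rw [← mul_inv, Real.mul_self_sqrt hp'.le, one_div]
  -- The two factors `1 / √p` inside each summand combine to the `1 / p` of `c = 1 / (p s)`.
  have hscale : ∑ i, ‖Rhat i - R * Hm i‖ / Real.sqrt p *
      (‖Rhat i - R * Hm i‖ / Real.sqrt p + 2 * (‖R‖ / Real.sqrt p) * ‖Hm i‖)
      = (1 / p) * ∑ i, ‖Rhat i - R * Hm i‖ *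
        (‖Rhat i - R * Hm i‖ + 2 * ‖R‖ * ‖Hm i‖) := by
    rw [Finset.mul_sum]
    refine Finset.sum_congr rfl fun i _ => ?_
    rw [hsq]
    ring
  rw [hscale]
  refine (mul_le_mul_of_nonneg_left hmain (by positivity)).trans (le_of_eq ?_)
  rw [hc, one_div_mul_eq_div, ← one_div_mul_one_div]
  ring

end Frobenius
end

section
/- Let p, q, k, r be positive integers, let R, R̂ ∈ ℝ^{p×k} with R̂ᵀ R̂ = p·I_k, let C, Ĉ ∈ ℝ^{q×r} with Ĉᵀ Ĉ = q·I_r, let H_R ∈ ℝ^{k×k} and H_C ∈ ℝ^{r×r} be invertible, let F ∈ ℝ^{k×r} and E ∈ ℝ^{p×q}, and set Y = R F Cᵀ + E and F̂ = (1/(pq)) R̂ᵀ Y Ĉ. Then F̂ − H_R⁻¹ F (H_C⁻¹)ᵀ = (1/(pq)) R̂ᵀ (R − R̂ H_R⁻¹) F (C − Ĉ H_C⁻¹)ᵀ Ĉ + (1/p) R̂ᵀ (R − R̂ H_R⁻¹) F (H_C⁻¹)ᵀ + (1/q) H_R⁻¹ F (C − Ĉ H_C⁻¹)ᵀ Ĉ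 + (1/(pq)) R̂ᵀ E Ĉ. -/
/-!
With `A = Rhatᵀ (R - Rhat HR⁻¹)` and `B = (C - Chat HC⁻¹)ᵀ Chat`, the normalizations of `Rhat` and
`Chat` give `Rhatᵀ R = A + p HR⁻¹` and `Cᵀ Chat = B + q (HC⁻¹)ᵀ`. The identity is the expansion of
`(A + p HR⁻¹) F (B + q (HC⁻¹)ᵀ) / (p q)`, whose last term `HR⁻¹ F (HC⁻¹)ᵀ` is the one subtracted
from `Fhat`.
-/

open Matrix

theorem statement11 (p q k r : ℕ) (hp : 0 < p) (hq : 0 < q) (hk : 0 < k) (hr : 0 < r)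
    (R Rhat : Matrix (Fin p) (Fin k) ℝ)
    (hRhat : Rhatᵀ * Rhat = (p : ℝ) • (1 : Matrix (Fin k) (Fin k) ℝ))
    (C Chat : Matrix (Fin q) (Fin r) ℝ)
    (hChat : Chatᵀ * Chat = (q : ℝ) • (1 : Matrix (Fin r) (Fin r) ℝ))
    (HR : Matrix (Fin k) (Fin k) ℝ) (HC : Matrix (Fin r) (Fin r) ℝ)
    [Invertible HR] [Invertible HC]
    (F : Matrix (Fin k) (Fin r) ℝ) (E : Matrix (Fin p) (Fin q) ℝ)
    (Y : Matrix (Fin p) (Fin q) ℝ) (hY : Y = R * F * Cᵀ + E)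
    (Fhat : Matrix (Fin k) (Fin r) ℝ)
    (hFhat : Fhat = ((1 : ℝ) / (p * q)) • (Rhatᵀ * Y * Chat)) :
    Fhat - ⅟HR * F * (⅟HC)ᵀ
      = ((1 : ℝ) / (p * q)) • (Rhatᵀ * (R - Rhat * ⅟HR) * F * (C - Chat * ⅟HC)ᵀ * Chat)
        + ((1 : ℝ) / p) • (Rhatᵀ * (R - Rhat * ⅟HR) * F * (⅟HC)ᵀ)
        + ((1 : ℝ) / q) • (⅟HR * F * (C - Chat * ⅟HC)ᵀ * Chat)
        + ((1 : ℝ) / (p * q)) • (Rhatᵀ * E * Chat) := by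
  have hp' : (p : ℝ) ≠ 0 := by positivity
  have hq' : (q : ℝ) ≠ 0 := by positivity
  -- The normalizations give `Rhatᵀ R` and `Cᵀ Chat` as loading error plus scaled inverse rotation.
  have hA : Rhatᵀ * R = Rhatᵀ * (R - Rhat * ⅟HR) + (p : ℝ) • ⅟HR := by
    rw [Matrix.mul_sub, ← Matrix.mul_assoc, hRhat, Matrix.smul_mul, Matrix.one_mul,
      sub_add_cancel]
  have hB : Cᵀ * Chat = (C - Chat * ⅟HC)ᵀ * Chat + (q : ℝ) • (⅟HC)ᵀ := by
    rw [Matrix.transpose_sub, Matrix.transpose_mul, Matrix.sub_mul, Matrix.mul_assoc (⅟HC)ᵀ,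
      hChat, Matrix.mul_smul, Matrix.mul_one, sub_add_cancel]
  have hY' : Rhatᵀ * Y * Chat = (Rhatᵀ * R) * F * (Cᵀ * Chat) + Rhatᵀ * E * Chat := by
    rw [hY]
    simp only [Matrix.mul_add, Matrix.add_mul, Matrix.mul_assoc]
  rw [hFhat, hY', hA, hB, Matrix.mul_assoc _ (C - Chat * ⅟HC)ᵀ Chat,
    Matrix.mul_assoc _ (C - Chat * ⅟HC)ᵀ Chat]
  generalize Rhatᵀ * (R - Rhat * ⅟HR) = A
  generalize (C - Chat * ⅟HC)ᵀ * Chat = B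
  simp only [Matrix.mul_add, Matrix.add_mul, Matrix.smul_mul, Matrix.mul_smul]
  match_scalars <;> field_simp <;> ring
end

section
/- Let p, q, k, r be positive integers, let R, R̂ ∈ ℝ^{p×k} with R̂ᵀ R̂ = p·I_k, let C, Ĉ ∈ ℝ^{q×r} with Ĉᵀ Ĉ = q·I_r, let H_R ∈ ℝ^{k×k} and H_C ∈ ℝ^{r×r} be invertible, let F ∈ ℝ^{k×r} and E ∈ ℝ^{p×q}, and set Y = R F Cᵀ + E and F̂ = (1/(pq)) R̂ᵀ Y Ĉ. Then F̂ − H_R⁻¹ F (H_C⁻¹)ᵀ equals the sum of the following seven terms: (1/(pq)) R̂ᵀ (R − R̂ H_R⁻¹) F (C − Ĉ H_C⁻¹)ᵀ Ĉ; (1/p) R̂ᵀ (R − R̂ H_R⁻¹) F (H_C⁻¹)ᵀ; (1/q) H_R⁻¹ F (C − Ĉ H_C⁻¹)ᵀ Ĉ; (1/(pq)) (R̂ − R H_R)ᵀ E (Ĉ − C H_C); (1/(pq)) (R̂ − R H_R)ᵀ E C H_C; (1/(pq)) H_Rᵀ Rᵀ E (Ĉ − C H_C); and (1/(pq)) H_Rᵀ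 Rᵀ E C H_C. -/
/-!
The normalizations `R̂ᵀ R̂ = p I` and `Ĉᵀ Ĉ = q I` give `R̂ᵀ R = R̂ᵀ (R - R̂ H_R⁻¹) + p H_R⁻¹` and
`Cᵀ Ĉ = (C - Ĉ H_C⁻¹)ᵀ Ĉ + q (H_C⁻¹)ᵀ`. Expanding the signal `(R̂ᵀ R) F (Cᵀ Ĉ)` yields the first
three terms and `p q H_R⁻¹ F (H_C⁻¹)ᵀ`; splitting `R̂ = (R̂ - R H_R) + R H_R` and
`Ĉ = (Ĉ - C H_C) + C H_C` in the noise `R̂ᵀ E Ĉ` yields the other four.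
-/

open Matrix

theorem statement12 (p q k r : ℕ) (hp : 0 < p) (hq : 0 < q) (hk : 0 < k) (hr : 0 < r)
    (R Rhat : Matrix (Fin p) (Fin k) ℝ)
    (hRhat : Rhatᵀ * Rhat = (p : ℝ) • (1 : Matrix (Fin k) (Fin k) ℝ))
    (C Chat : Matrix (Fin q) (Fin r) ℝ)
    (hChat : Chatᵀ * Chat = (q : ℝ) • (1 : Matrix (Fin r) (Fin r) ℝ))
    (HR : Matrix (Fin k) (Fin k) ℝ) (HC : Matrix (Fin r) (Fin r) ℝ)
    [Invertible HR] [Invertible HC]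
    (F : Matrix (Fin k) (Fin r) ℝ) (E : Matrix (Fin p) (Fin q) ℝ)
    (Y : Matrix (Fin p) (Fin q) ℝ) (hY : Y = R * F * Cᵀ + E)
    (Fhat : Matrix (Fin k) (Fin r) ℝ)
    (hFhat : Fhat = ((1 : ℝ) / (p * q)) • (Rhatᵀ * Y * Chat)) :
    Fhat - ⅟HR * F * (⅟HC)ᵀ
      = ((1 : ℝ) / (p * q)) • (Rhatᵀ * (R - Rhat * ⅟HR) * F * (C - Chat * ⅟HC)ᵀ * Chat)
        + ((1 : ℝ) / p) • (Rhatᵀ * (R - Rhat * ⅟HR) * F * (⅟HC)ᵀ)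
        + ((1 : ℝ) / q) • (⅟HR * F * (C - Chat * ⅟HC)ᵀ * Chat)
        + ((1 : ℝ) / (p * q)) • ((Rhat - R * HR)ᵀ * E * (Chat - C * HC))
        + ((1 : ℝ) / (p * q)) • ((Rhat - R * HR)ᵀ * E * (C * HC))
        + ((1 : ℝ) / (p * q)) • (HRᵀ * Rᵀ * E * (Chat - C * HC))
        + ((1 : ℝ) / (p * q)) • (HRᵀ * Rᵀ * E * (C * HC)) := by
  have hp' : (p : ℝ) ≠ 0 := by exact_mod_cast hp.ne'
  have hq' : (q : ℝ) ≠ 0 := by exact_mod_cast hq.ne'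
  have hA : Rhatᵀ * R = Rhatᵀ * (R - Rhat * ⅟HR) + (p : ℝ) • ⅟HR := by
    rw [Matrix.mul_sub, ← Matrix.mul_assoc, hRhat, Matrix.smul_mul, Matrix.one_mul,
      sub_add_cancel]
  have hB : Cᵀ * Chat = (C - Chat * ⅟HC)ᵀ * Chat + (q : ℝ) • (⅟HC)ᵀ := by
    rw [transpose_sub, transpose_mul, Matrix.sub_mul, Matrix.mul_assoc (⅟HC)ᵀ, hChat,
      Matrix.mul_smul, Matrix.mul_one, sub_add_cancel]
  have hsignal : Rhatᵀ * (R * F * Cᵀ) * Chat = (Rhatᵀ * R) * F * (Cᵀ * Chat) := by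
    simp only [Matrix.mul_assoc]
  have hnoise : Rhatᵀ * E * Chat
      = (Rhat - R * HR)ᵀ * E * (Chat - C * HC) + (Rhat - R * HR)ᵀ * E * (C * HC)
        + HRᵀ * Rᵀ * E * (Chat - C * HC) + HRᵀ * Rᵀ * E * (C * HC) := by
    rw [← Matrix.mul_add, sub_add_cancel, add_assoc, ← Matrix.mul_add, sub_add_cancel,
      ← Matrix.add_mul, ← Matrix.add_mul, transpose_sub, transpose_mul, sub_add_cancel]
  rw [hFhat, hY, Matrix.mul_add, Matrix.add_mul, hsignal, hnoise, hA, hB,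
    Matrix.mul_assoc _ (C - Chat * ⅟HC)ᵀ Chat, Matrix.mul_assoc _ (C - Chat * ⅟HC)ᵀ Chat]
  -- Only bilinearity in the two projected loading errors remains to be used.
  generalize Rhatᵀ * (R - Rhat * ⅟HR) = A
  generalize (C - Chat * ⅟HC)ᵀ * Chat = B
  simp only [Matrix.add_mul, Matrix.mul_add, Matrix.smul_mul, Matrix.mul_smul, smul_add]
  match_scalars <;> field_simp <;> ring
end
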